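/- Fix integers q ≥ 1 and γ with 0 ≤ γ ≤ q-1, a real u > 0, and for each integer d ≥ 2 a real K(d) < 0. If lim_{d→∞} (-K(d))·d = 0, then lim_{d→∞} P(d,q,γ,K(d),u) = 1 (subcritical phase of the phase transition). -/

import Mathlib

open Real MeasureTheory Filter Asymptotics

/-- Surface area `ω_n = 2 π^{n/2} / Γ(n/2)` of the Euclidean unit sphere in `ℝ^n`. -/
noncomputable def omegaS (n : ℕ) : ℝ := 2 * Real.pi ^ ((n : ℝ) / 2) / Real.Gamma ((n : ℝ) / 2)

/-- The constant `D(d,q,γ)`. -/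
noncomputable def Dconst (d q γ : ℕ) : ℝ :=
  omegaS (γ + 1) * omegaS (q - γ) * omegaS (d - q) / (omegaS (d - q + γ + 1) * omegaS (d - γ))

/-- `R_K(x)`, the Euclidean (Beltrami–Klein) radius of a hyperbolic ball of radius `x`. -/
noncomputable def RK (K x : ℝ) : ℝ :=
  Real.sinh (Real.sqrt (-K) * x) /
    (Real.sqrt (-K) * Real.sqrt (1 + Real.sinh (Real.sqrt (-K) * x) ^ 2))

/-- `C_K(d,m,u)`, the invariant measure of the `m`-flats meeting the ball of radius `u`. -/
noncomputable def Cconst (K : ℝ) (d m : ℕ) (u : ℝ) : ℝ :=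
  omegaS (d - m) * Real.sqrt (-K) ^ (-(d : ℝ) + (m : ℝ) + 1) *
    ∫ r in (0:ℝ)..u,
      Real.cosh (Real.sqrt (-K) * r) ^ m * Real.sinh (Real.sqrt (-K) * r) ^ (d - m - 1)

/-- `P(d,q,γ,K,u)`, the hyperbolic intersection probability of the random flats `E` and `L`. -/
noncomputable def Pprob (d q γ : ℕ) (K u : ℝ) : ℝ :=
  Dconst d q γ * omegaS (d - γ) / Cconst K d (d - q + γ) u *
    ∫ r in (0:ℝ)..(1 / Real.sqrt (-K)),
      r ^ ((q : ℝ) - (γ : ℝ) - 1) *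
        ∫ z in (0:ℝ)..(min 1 (RK K u / r)),
          z ^ q * (1 - z ^ 2) ^ (((d : ℝ) - (q : ℝ)) / 2 - 1) *
            (1 + K * r ^ 2 * z ^ 2) ^ (-((d : ℝ) + 1) / 2)

/-- `F_{K,u}(δ)`, the distribution function of the distance of `E ∩ L` to the origin. -/
noncomputable def Fdist (d q γ : ℕ) (K u δ : ℝ) : ℝ :=
  Dconst d q γ * omegaS (d - γ) / Cconst K d (d - q + γ) u *
    ∫ r in (0:ℝ)..(RK K δ),
      r ^ ((q : ℝ) - (γ : ℝ) - 1) *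
        ∫ z in (0:ℝ)..(min 1 (RK K u / r)),
          z ^ q * (1 - z ^ 2) ^ (((d : ℝ) - (q : ℝ)) / 2 - 1) *
            (1 + K * r ^ 2 * z ^ 2) ^ (-((d : ℝ) + 1) / 2)

/-- `f_{d,q,γ,K}(δ)`, the density of the distance of `E ∩ L` to the origin. -/
noncomputable def fdens (d q γ : ℕ) (K u δ : ℝ) : ℝ :=
  Dconst d q γ * omegaS (d - γ) / Cconst K d (d - q + γ) u *
    (RK K δ ^ ((q : ℝ) - (γ : ℝ) - 1) / Real.cosh (Real.sqrt (-K) * δ) ^ 2) *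
    ∫ z in (0:ℝ)..(min 1 (RK K u / RK K δ)),
      z ^ q * (1 - z ^ 2) ^ (((d : ℝ) - (q : ℝ)) / 2 - 1) *
        (1 + K * RK K δ ^ 2 * z ^ 2) ^ (-((d : ℝ) + 1) / 2)

/-- The limiting constant `ρ(u,q,γ,κ)` in the critical phase. -/
noncomputable def rhoConst (u : ℝ) (q γ : ℕ) (κ : ℝ) : ℝ :=
  omegaS (γ + 1) * (2 * Real.pi) ^ (-((γ : ℝ) + 1) / 2) * u ^ (q + 1) *
    κ ^ (((γ : ℝ) + 1) / 2) *
    (∫ s in (0:ℝ)..u, Real.exp (κ * s ^ 2 / 2) * s ^ ((q : ℝ) - (γ : ℝ) - 1))⁻¹ *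
    ∫ r in (0:ℝ)..1,
      r ^ ((q : ℝ) - (γ : ℝ) - 1) *
        ∫ v in (0:ℝ)..(1 / r),
          v ^ q * Real.exp (-(1 / 2) * u ^ 2 * κ * v ^ 2 * (1 - r ^ 2))

/-!
Write `d = b + γ + k + 1` and `q = γ + k + 1`. The substitution `t = r z` turns the double integral
into the average of `kleinMass` against `projDensity`, and `t = tanh (√(-K) r) / √(-K)` identifies
`Cconst` with the full mass of `kleinDensity`. So the probability is the average, over the length
`z ∈ [0, 1]` of the projection of a random unit vector, of a distribution function which equals `1`
as soon as `z ≥ tanh (√(-K) u)`. The probability is therefore at most `1` and falls short of it by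
at most the chance that `z ≤ tanh (√(-K) u)`. Typically `z` has order `1 / √d`, so Bernoulli's
inequality bounds this chance by `2 (√(-K d) u) ^ (γ + 1)`, which tends to `0`.
-/

theorem hasDerivAt_tanh (x : ℝ) : HasDerivAt tanh (cosh x ^ 2)⁻¹ x := by
  have hquot := (hasDerivAt_sinh x).div (hasDerivAt_cosh x) (cosh_pos x).ne'
  have htanh : sinh / cosh = tanh := funext fun y => (tanh_eq_sinh_div_cosh y).symm
  rw [htanh] at hquot
  refine hquot.congr_deriv ?_
  rw [inv_eq_one_div, ← cosh_sq_sub_sinh_sq x]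
  ring

theorem tanh_nonneg {x : ℝ} (hx : 0 ≤ x) : 0 ≤ tanh x := by
  rw [tanh_eq_sinh_div_cosh]
  exact div_nonneg (sinh_nonneg_iff.2 hx) (cosh_pos x).le

theorem tanh_le_self {x : ℝ} (hx : 0 ≤ x) : tanh x ≤ x := by
  have hmono : Monotone fun y => y - tanh y := by
    refine monotone_of_hasDerivAt_nonneg (fun y => (hasDerivAt_id y).sub (hasDerivAt_tanh y)) ?_
    exact fun y => sub_nonneg.2 (inv_le_one_of_one_le₀ (one_le_pow₀ (one_le_cosh y)))
  simpa using hmono hx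

theorem integral_rpow_mul_one_sub_rpow {α β : ℝ} (hα : 0 < α) (hβ : 0 < β) :
    ∫ x in (0:ℝ)..1, x ^ (α - 1) * (1 - x) ^ (β - 1) = ProbabilityTheory.beta α β := by
  have hcomplex : ((∫ x in (0:ℝ)..1, x ^ (α - 1) * (1 - x) ^ (β - 1) : ℝ) : ℂ) =
      Complex.betaIntegral α β := by
    rw [Complex.betaIntegral, ← intervalIntegral.integral_ofReal]
    refine intervalIntegral.integral_congr fun x hx => ?_
    rw [Set.uIcc_of_le zero_le_one] at hx
    rw [Complex.ofReal_mul, Complex.ofReal_cpow hx.1, Complex.ofReal_cpow (sub_nonneg.2 hx.2)]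
    push_cast
    rfl
  rw [ProbabilityTheory.beta_eq_betaIntegralReal α β hα hβ, ← hcomplex, Complex.ofReal_re]

theorem integral_pow_mul_one_sub_sq_rpow (k : ℕ) {β : ℝ} (hβ : 0 < β) :
    ∫ z in (0:ℝ)..1, z ^ k * (1 - z ^ 2) ^ (β - 1) =
      ProbabilityTheory.beta (((k : ℝ) + 1) / 2) β / 2 := by
  have hsubst := intervalIntegral.integral_comp_mul_deriv_of_deriv_nonneg (a := 0) (b := 1)
    (f := fun z : ℝ => z ^ 2) (f' := fun z => 2 * z)
    (g := fun x : ℝ => x ^ (((k : ℝ) + 1) / 2 - 1) * (1 - x) ^ (β - 1))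
    (by fun_prop) (fun z _ => by simpa using hasDerivAt_pow 2 z)
    (fun z hz => by simp only [zero_le_one, inf_of_le_left] at hz; linarith [hz.1])
  simp only [ne_eq, OfNat.ofNat_ne_zero, not_false_eq_true, zero_pow, one_pow] at hsubst
  rw [integral_rpow_mul_one_sub_rpow (by positivity) hβ] at hsubst
  rw [← hsubst, ← intervalIntegral.integral_div]
  refine intervalIntegral.integral_congr_Ioo_of_le zero_le_one fun z hz => ?_
  have hpow : (z ^ 2) ^ (((k : ℝ) + 1) / 2 - 1) * z = z ^ k := by
    rw [← rpow_natCast z 2, ← rpow_mul hz.1.le, ← rpow_natCast z k, ← rpow_add_one hz.1.ne']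
    congr 1
    push_cast
    ring
  simp only [Function.comp_apply, ← hpow]
  ring

theorem intervalIntegral_mul_comp_mul_swap {w h : ℝ → ℝ} {a b c e M : ℝ}
    (hw : IntervalIntegrable w volume c e) (hh : Measurable h) (hM : ∀ t, ‖h t‖ ≤ M) :
    ∫ r in a..b, ∫ z in c..e, w z * (z * h (r * z)) =
      ∫ z in c..e, w z * ∫ t in (a * z)..(b * z), h t := by
  have hint : IntegrableOn (Function.uncurry fun r z => w z * (z * h (r * z)))
      (Set.uIoc a b ×ˢ Set.uIoc c e) := by
    have hwz : IntegrableOn (fun z => w z * z) (Set.uIoc c e) :=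
      intervalIntegrable_iff.1 (hw.mul_continuousOn continuousOn_id)
    have hone : IntegrableOn (fun _ : ℝ => (1 : ℝ)) (Set.uIoc a b) :=
      intervalIntegrable_iff.1 intervalIntegrable_const
    have hprod := hone.mul_prod hwz
    rw [Measure.prod_restrict] at hprod
    have hbdd := hprod.mul_bdd (g := fun p : ℝ × ℝ => h (p.1 * p.2))
      (hh.comp measurable_mul).aestronglyMeasurable (.of_forall fun p => hM _)
    refine hbdd.congr (.of_forall fun p => ?_)
    simp only [Function.uncurry]
    ring
  rw [intervalIntegral_intervalIntegral_swap hint]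
  refine intervalIntegral.integral_congr fun z _ => ?_
  simp only [intervalIntegral.integral_const_mul,
    ← intervalIntegral.smul_integral_comp_mul_right, smul_eq_mul]

theorem integral_indicator_Icc_zero {f : ℝ → ℝ} {B R : ℝ} (hB : 0 ≤ B) (hR : 0 ≤ R) :
    ∫ t in (0:ℝ)..B, (Set.Icc 0 R).indicator f t = ∫ t in (0:ℝ)..min B R, f t := by
  rw [← intervalIntegral.integral_indicator ⟨le_min hB hR, min_le_left B R⟩]
  refine intervalIntegral.integral_congr_Ioo_of_le hB fun t ht => ?_
  simp [Set.indicator, ht.1.le, ht.2.le]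

theorem intervalIntegral_mul_comp_mul_swap_min {w g : ℝ → ℝ} {B R : ℝ} (hB : 0 ≤ B) (hR : 0 ≤ R)
    (hw : IntervalIntegrable w volume 0 1) (hg : ContinuousOn g (Set.Icc 0 R)) :
    ∫ r in (0:ℝ)..B, ∫ z in (0:ℝ)..min 1 (R / r), w z * (z * g (r * z)) =
      ∫ z in (0:ℝ)..1, w z * ∫ t in (0:ℝ)..min (B * z) R, g t := by
  have hmeas : Measurable ((Set.Icc 0 R).indicator g) := by
    rw [← Set.piecewise_eq_indicator]
    exact hg.measurable_piecewise continuousOn_const measurableSet_Icc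
  obtain ⟨M, hM⟩ := isCompact_Icc.exists_bound_of_continuousOn hg
  have hbound : ∀ t, ‖(Set.Icc 0 R).indicator g t‖ ≤ max M 0 := fun t => by
    by_cases ht : t ∈ Set.Icc 0 R
    · simpa [ht] using Or.inl (hM t ht)
    · simp [ht]
  have hcut : ∀ r ∈ Set.Ioo 0 B, ∫ z in (0:ℝ)..min 1 (R / r), w z * (z * g (r * z)) =
      ∫ z in (0:ℝ)..1, w z * (z * (Set.Icc 0 R).indicator g (r * z)) := fun r hr => by
    rw [← integral_indicator_Icc_zero zero_le_one (div_nonneg hR hr.1.le)]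
    refine intervalIntegral.integral_congr_Ioo_of_le zero_le_one fun z hz => ?_
    have hrz : 0 ≤ r * z := mul_nonneg hr.1.le hz.1.le
    simp [Set.indicator, hz.1.le, hrz, le_div_iff₀' hr.1]
  rw [intervalIntegral.integral_congr_Ioo_of_le hB hcut,
    intervalIntegral_mul_comp_mul_swap hw hmeas hbound]
  refine intervalIntegral.integral_congr fun z hz => ?_
  rw [Set.uIcc_of_le zero_le_one] at hz
  simp only [zero_mul]
  rw [integral_indicator_Icc_zero (mul_nonneg hB hz.1) hR]

theorem integral_mul_le_integral_mul_const {w F : ℝ → ℝ} {a b M : ℝ} (hab : a ≤ b)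
    (hw : IntervalIntegrable w volume a b) (hw0 : ∀ z ∈ Set.Icc a b, 0 ≤ w z)
    (hF : ContinuousOn F (Set.Icc a b)) (hFM : ∀ z ∈ Set.Icc a b, F z ≤ M) :
    ∫ z in a..b, w z * F z ≤ (∫ z in a..b, w z) * M := by
  rw [← intervalIntegral.integral_mul_const]
  refine intervalIntegral.integral_mono_on hab (hw.mul_continuousOn (Set.uIcc_of_le hab ▸ hF))
    (hw.mul_const M) fun z hz => ?_
  exact mul_le_mul_of_nonneg_left (hFM z hz) (hw0 z hz)

theorem integral_mul_const_le_integral_mul {w F : ℝ → ℝ} {a b c M : ℝ} (hab : a ≤ b) (hbc : b ≤ c)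
    (hw : IntervalIntegrable w volume a c) (hw0 : ∀ z ∈ Set.Icc a c, 0 ≤ w z)
    (hF : ContinuousOn F (Set.Icc a c)) (hF0 : ∀ z ∈ Set.Icc a b, 0 ≤ F z)
    (hFM : ∀ z ∈ Set.Icc b c, F z = M) :
    (∫ z in b..c, w z) * M ≤ ∫ z in a..c, w z * F z := by
  have hwF : IntervalIntegrable (fun z => w z * F z) volume a c :=
    hw.mul_continuousOn (Set.uIcc_of_le (hab.trans hbc) ▸ hF)
  have hb : b ∈ Set.uIcc a c := Set.mem_uIcc_of_le hab hbc
  have hhead : 0 ≤ ∫ z in a..b, w z * F z := intervalIntegral.integral_nonneg hab fun z hz =>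
    mul_nonneg (hw0 z ⟨hz.1, hz.2.trans hbc⟩) (hF0 z hz)
  have htail : ∫ z in b..c, w z * F z = (∫ z in b..c, w z) * M := by
    rw [← intervalIntegral.integral_mul_const]
    refine intervalIntegral.integral_congr fun z hz => ?_
    rw [Set.uIcc_of_le hbc] at hz
    simp only [hFM z hz]
  rw [← htail, ← intervalIntegral.integral_add_adjacent_intervals
    (hwF.mono_set (Set.uIcc_subset_uIcc_left hb)) (hwF.mono_set (Set.uIcc_subset_uIcc_right hb))]
  exact le_add_of_nonneg_left hhead

theorem omegaS_pos {n : ℕ} (hn : 0 < n) : 0 < omegaS n := by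
  unfold omegaS
  positivity

/-- Up to normalisation, the density of the length of the orthogonal projection to `ℝ^{k+1}` of a
uniform random point of the unit sphere in `ℝ^{k+1+b}`. -/
noncomputable def projDensity (k b : ℕ) (z : ℝ) : ℝ := z ^ k * (1 - z ^ 2) ^ ((b : ℝ) / 2 - 1)

section projDensity

variable {k b : ℕ}

theorem continuous_projDensity (hb : 2 ≤ b) : Continuous (projDensity k b) := by
  have hexp : 0 ≤ (b : ℝ) / 2 - 1 := by
    have : (2 : ℝ) ≤ b := by exact_mod_cast hb
    linarith
  unfold projDensity
  fun_prop (disch := exact fun _ => Or.inr hexp)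

theorem projDensity_nonneg {z : ℝ} (hz : z ∈ Set.Icc (0 : ℝ) 1) : 0 ≤ projDensity k b z :=
  mul_nonneg (pow_nonneg hz.1 k) (rpow_nonneg (sub_nonneg.2 (pow_le_one₀ hz.1 hz.2)) _)

theorem integral_projDensity (hb : 0 < b) :
    ∫ z in (0:ℝ)..1, projDensity k b z = omegaS (k + 1 + b) / (omegaS (k + 1) * omegaS b) := by
  have hpi : π ^ (((k : ℝ) + 1 + b) / 2) = π ^ (((k : ℝ) + 1) / 2) * π ^ ((b : ℝ) / 2) := by
    rw [← rpow_add pi_pos, add_div]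
  simp only [projDensity, omegaS]
  rw [integral_pow_mul_one_sub_sq_rpow k (by positivity), ProbabilityTheory.beta]
  push_cast
  rw [hpi, ← add_div]
  field_simp

theorem integral_projDensity_pos (hb : 0 < b) : 0 < ∫ z in (0:ℝ)..1, projDensity k b z := by
  rw [integral_projDensity hb]
  exact div_pos (omegaS_pos (by lia)) (mul_pos (omegaS_pos k.succ_pos) (omegaS_pos hb))

theorem integral_projDensity_le_pow {t : ℝ} (hb : 2 ≤ b) (ht : t ∈ Set.Icc (0 : ℝ) 1) :
    ∫ z in (0:ℝ)..t, projDensity k b z ≤ t ^ (k + 1) / (k + 1) := by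
  have hb' : (2 : ℝ) ≤ b := by exact_mod_cast hb
  calc ∫ z in (0:ℝ)..t, projDensity k b z ≤ ∫ z in (0:ℝ)..t, z ^ k := by
        refine intervalIntegral.integral_mono_on ht.1
          ((continuous_projDensity hb).intervalIntegrable _ _)
          ((continuous_pow k).intervalIntegrable _ _) fun z hz => ?_
        refine mul_le_of_le_one_right (pow_nonneg hz.1 k) (rpow_le_one ?_ ?_ (by linarith))
        · exact sub_nonneg.2 (pow_le_one₀ hz.1 (hz.2.trans ht.2))
        · exact sub_le_self 1 (sq_nonneg z)
    _ = t ^ (k + 1) / (k + 1) := by simp [integral_pow]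

theorem half_pow_le_projDensity {z : ℝ} (hb : 4 ≤ b) (hz : z ∈ Set.Icc 0 (1 / √(b : ℝ))) :
    z ^ k * (1 / 2) ≤ projDensity k b z := by
  have hb' : (4 : ℝ) ≤ b := by exact_mod_cast hb
  have hbz : b * z ^ 2 ≤ 1 := by
    have hsq := pow_le_pow_left₀ hz.1 hz.2 2
    rw [div_pow, sq_sqrt (by positivity), one_pow, le_div_iff₀ (by positivity)] at hsq
    linarith
  have hbernoulli := one_add_mul_self_le_rpow_one_add (s := -z ^ 2) (by nlinarith)
    (p := (b : ℝ) / 2 - 1) (by linarith)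
  refine mul_le_mul_of_nonneg_left ?_ (pow_nonneg hz.1 k)
  rw [sub_eq_add_neg 1 (z ^ 2)]
  nlinarith [sq_nonneg z]

theorem pow_le_integral_projDensity (hb : 4 ≤ b) :
    (1 / √(b : ℝ)) ^ (k + 1) / (k + 1) * (1 / 2) ≤ ∫ z in (0:ℝ)..1, projDensity k b z := by
  have hcont : Continuous (projDensity k b) := continuous_projDensity (by lia)
  have hle : 1 / √(b : ℝ) ≤ 1 :=
    div_le_one_of_le₀ (one_le_sqrt.2 (by exact_mod_cast (by lia : 1 ≤ b))) (sqrt_nonneg _)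
  calc (1 / √(b : ℝ)) ^ (k + 1) / (k + 1) * (1 / 2)
      = ∫ z in (0:ℝ)..(1 / √(b : ℝ)), z ^ k * (1 / 2) := by
        rw [intervalIntegral.integral_mul_const, integral_pow]
        simp
    _ ≤ ∫ z in (0:ℝ)..(1 / √(b : ℝ)), projDensity k b z :=
        intervalIntegral.integral_mono_on (by positivity)
          (Continuous.intervalIntegrable (by fun_prop) _ _) (hcont.intervalIntegrable _ _)
          fun z hz => half_pow_le_projDensity hb hz
    _ ≤ ∫ z in (0:ℝ)..1, projDensity k b z := by
        refine intervalIntegral.integral_mono_interval le_rfl (by positivity) hle ?_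
          (hcont.intervalIntegrable _ _)
        filter_upwards [ae_restrict_mem measurableSet_Ioc] with z hz
        exact projDensity_nonneg (Set.Ioc_subset_Icc_self hz)

theorem integral_projDensity_le_mul {t : ℝ} (hb : 4 ≤ b) (ht : t ∈ Set.Icc (0 : ℝ) 1) :
    ∫ z in (0:ℝ)..t, projDensity k b z ≤
      2 * (√(b : ℝ) * t) ^ (k + 1) * ∫ z in (0:ℝ)..1, projDensity k b z := by
  have ht0 := ht.1
  calc ∫ z in (0:ℝ)..t, projDensity k b z ≤ t ^ (k + 1) / (k + 1) :=
        integral_projDensity_le_pow (by lia) ht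
    _ = 2 * (√(b : ℝ) * t) ^ (k + 1) * ((1 / √(b : ℝ)) ^ (k + 1) / (k + 1) * (1 / 2)) := by
        rw [div_pow, mul_pow, one_pow]
        field_simp
    _ ≤ 2 * (√(b : ℝ) * t) ^ (k + 1) * ∫ z in (0:ℝ)..1, projDensity k b z := by
        gcongr
        exact pow_le_integral_projDensity hb

end projDensity

/-- Up to normalisation, the density of the Euclidean distance to the origin, in the Beltrami–Klein
model of curvature `K`, of an `m`-flat of `(m+k+1)`-dimensional hyperbolic space under the invariant
measure. -/
noncomputable def kleinDensity (K : ℝ) (m k : ℕ) (t : ℝ) : ℝ :=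
  t ^ k * (1 + K * t ^ 2) ^ (-((m : ℝ) + k + 2) / 2)

section kleinDensity

variable {K u : ℝ} {m k : ℕ}

theorem RK_eq_tanh_div (K x : ℝ) : RK K x = tanh (√(-K) * x) / √(-K) := by
  rw [RK, add_comm 1, ← cosh_sq, sqrt_sq (cosh_pos _).le, tanh_eq_sinh_div_cosh, div_div,
    mul_comm √(-K) (cosh _)]

theorem sqrt_mul_RK (hK : K < 0) (x : ℝ) : √(-K) * RK K x = tanh (√(-K) * x) := by
  rw [RK_eq_tanh_div, mul_div_cancel₀ _ (sqrt_pos.2 (neg_pos.2 hK)).ne']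

theorem RK_pos (hK : K < 0) (hu : 0 < u) : 0 < RK K u := by
  have hs : 0 < √(-K) := sqrt_pos.2 (neg_pos.2 hK)
  unfold RK
  positivity

theorem one_add_mul_RK_sq (hK : K < 0) (x : ℝ) :
    1 + K * RK K x ^ 2 = (cosh (√(-K) * x) ^ 2)⁻¹ := by
  have hsq : √(-K) ^ 2 = -K := sq_sqrt (neg_pos.2 hK).le
  have htanh : 1 + K * RK K x ^ 2 = 1 - tanh (√(-K) * x) ^ 2 := by
    rw [← sqrt_mul_RK hK, mul_pow, hsq]
    ring
  have hcosh := (cosh_pos (√(-K) * x)).ne'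
  rw [htanh, tanh_eq_sinh_div_cosh, div_pow, sinh_sq]
  field_simp
  ring

theorem one_add_mul_sq_pos (hK : K < 0) {t : ℝ} (ht : t ∈ Set.Icc 0 (RK K u)) :
    0 < 1 + K * t ^ 2 := by
  have hRK : 0 < 1 + K * RK K u ^ 2 := by
    rw [one_add_mul_RK_sq hK]
    positivity
  nlinarith [pow_le_pow_left₀ ht.1 ht.2 2]

theorem continuousOn_kleinDensity (hK : K < 0) :
    ContinuousOn (kleinDensity K m k) (Set.Icc 0 (RK K u)) := by
  have hbase : ContinuousOn (fun t => 1 + K * t ^ 2) (Set.Icc 0 (RK K u)) := by fun_prop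
  exact (continuousOn_pow k).mul
    (hbase.rpow_const fun t ht => Or.inl (one_add_mul_sq_pos hK ht).ne')

theorem kleinDensity_nonneg (hK : K < 0) {t : ℝ} (ht : t ∈ Set.Icc 0 (RK K u)) :
    0 ≤ kleinDensity K m k t :=
  mul_nonneg (pow_nonneg ht.1 k) (rpow_nonneg (one_add_mul_sq_pos hK ht).le _)

theorem intervalIntegrable_kleinDensity (hK : K < 0) (hu : 0 < u) :
    IntervalIntegrable (kleinDensity K m k) volume 0 (RK K u) :=
  (continuousOn_kleinDensity hK).intervalIntegrable_of_Icc (RK_pos hK hu).le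

theorem integral_kleinDensity_pos (hK : K < 0) (hu : 0 < u) :
    0 < ∫ t in (0:ℝ)..RK K u, kleinDensity K m k t :=
  intervalIntegral.intervalIntegral_pos_of_pos_on (intervalIntegrable_kleinDensity hK hu)
    (fun _ ht => mul_pos (pow_pos ht.1 k)
      (rpow_pos_of_pos (one_add_mul_sq_pos hK (Set.Ioo_subset_Icc_self ht)) _)) (RK_pos hK hu)

theorem hasDerivAt_RK (hK : K < 0) (x : ℝ) : HasDerivAt (RK K) (cosh (√(-K) * x) ^ 2)⁻¹ x := by
  have hs : √(-K) ≠ 0 := (sqrt_pos.2 (neg_pos.2 hK)).ne'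
  have htanh := ((hasDerivAt_tanh (√(-K) * x)).comp x
    ((hasDerivAt_id x).const_mul √(-K))).div_const √(-K)
  refine (htanh.congr_deriv (by field_simp)).congr_of_eventuallyEq (.of_forall fun y => ?_)
  exact RK_eq_tanh_div K y

theorem kleinDensity_RK_mul_deriv (hK : K < 0) (x : ℝ) :
    kleinDensity K m k (RK K x) * (cosh (√(-K) * x) ^ 2)⁻¹ =
      (√(-K) ^ k)⁻¹ * (cosh (√(-K) * x) ^ m * sinh (√(-K) * x) ^ k) := by
  have hs : √(-K) ≠ 0 := (sqrt_pos.2 (neg_pos.2 hK)).ne'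
  have hcosh : 0 < cosh (√(-K) * x) := cosh_pos _
  have hpow : ((cosh (√(-K) * x) ^ 2)⁻¹) ^ (-((m : ℝ) + k + 2) / 2) =
      cosh (√(-K) * x) ^ (m + k + 2) := by
    rw [inv_rpow (by positivity), ← rpow_neg (by positivity), ← rpow_natCast_mul hcosh.le,
      ← rpow_natCast]
    congr 1
    push_cast
    ring
  rw [kleinDensity, one_add_mul_RK_sq hK, hpow, RK_eq_tanh_div, tanh_eq_sinh_div_cosh,
    div_pow, div_pow]
  field_simp
  ring

theorem integral_kleinDensity (hK : K < 0) (u : ℝ) :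
    ∫ t in (0:ℝ)..RK K u, kleinDensity K m k t =
      (√(-K) ^ k)⁻¹ * ∫ r in (0:ℝ)..u, cosh (√(-K) * r) ^ m * sinh (√(-K) * r) ^ k := by
  have hsubst := intervalIntegral.integral_comp_mul_deriv_of_deriv_nonneg (a := 0) (b := u)
    (g := kleinDensity K m k) (fun x _ => (hasDerivAt_RK hK x).continuousAt.continuousWithinAt)
    (fun x _ => hasDerivAt_RK hK x) (fun x _ => by positivity)
  simp only [Function.comp_apply, kleinDensity_RK_mul_deriv hK,
    intervalIntegral.integral_const_mul] at hsubst
  rw [hsubst, RK_eq_tanh_div K 0, mul_zero, tanh_zero, zero_div]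

theorem Cconst_eq_omegaS_mul_integral_kleinDensity (hK : K < 0) (u : ℝ) :
    Cconst K (m + k + 1) m u = omegaS (k + 1) * ∫ t in (0:ℝ)..RK K u, kleinDensity K m k t := by
  have hexp : -((m + k + 1 : ℕ) : ℝ) + m + 1 = -(k : ℝ) := by
    push_cast
    ring
  rw [Cconst, integral_kleinDensity hK, hexp, rpow_neg (sqrt_nonneg _), rpow_natCast, mul_assoc,
    show m + k + 1 - m = k + 1 by lia, Nat.add_sub_cancel]

end kleinDensity

section kleinMass

/-- Up to normalisation, the invariant measure of the `m`-flats of `(m+k+1)`-dimensional hyperbolic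
space at Euclidean distance at most `min (z / √(-K)) (RK K u)` from the origin of the Beltrami–Klein
model, where the model ball has radius `1 / √(-K)`. -/
noncomputable def kleinMass (K u : ℝ) (m k : ℕ) (z : ℝ) : ℝ :=
  ∫ t in (0:ℝ)..min (1 / √(-K) * z) (RK K u), kleinDensity K m k t

variable {K u z : ℝ} {m k : ℕ}

theorem min_mem_Icc_RK (hK : K < 0) (hu : 0 < u) (hz : 0 ≤ z) :
    min (1 / √(-K) * z) (RK K u) ∈ Set.Icc 0 (RK K u) :=
  ⟨le_min (by positivity) (RK_pos hK hu).le, min_le_right _ _⟩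

theorem kleinMass_nonneg (hK : K < 0) (hu : 0 < u) (hz : 0 ≤ z) : 0 ≤ kleinMass K u m k z := by
  have hmin := min_mem_Icc_RK hK hu hz
  exact intervalIntegral.integral_nonneg hmin.1 fun t ht =>
    kleinDensity_nonneg hK ⟨ht.1, ht.2.trans hmin.2⟩

theorem kleinMass_le (hK : K < 0) (hu : 0 < u) (hz : 0 ≤ z) :
    kleinMass K u m k z ≤ ∫ t in (0:ℝ)..RK K u, kleinDensity K m k t := by
  have hmin := min_mem_Icc_RK hK hu hz
  refine intervalIntegral.integral_mono_interval le_rfl hmin.1 hmin.2 ?_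
    (intervalIntegrable_kleinDensity hK hu)
  filter_upwards [ae_restrict_mem measurableSet_Ioc] with t ht
  exact kleinDensity_nonneg hK (Set.Ioc_subset_Icc_self ht)

theorem kleinMass_eq_of_tanh_le (hz : tanh (√(-K) * u) ≤ z) :
    kleinMass K u m k z = ∫ t in (0:ℝ)..RK K u, kleinDensity K m k t := by
  have hle : RK K u ≤ 1 / √(-K) * z := by
    rw [RK_eq_tanh_div, one_div_mul_eq_div]
    gcongr
  rw [kleinMass, min_eq_right hle]

theorem continuousOn_kleinMass (hK : K < 0) (hu : 0 < u) :
    ContinuousOn (kleinMass K u m k) (Set.Ici 0) := by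
  have hprimitive := intervalIntegral.continuousOn_primitive_interval'
    (intervalIntegrable_kleinDensity (m := m) (k := k) hK hu) Set.left_mem_uIcc
  rw [Set.uIcc_of_le (RK_pos hK hu).le] at hprimitive
  exact hprimitive.comp (by fun_prop) fun z hz => min_mem_Icc_RK hK hu hz

end kleinMass

section Pprob

variable {γ k b : ℕ} {K u : ℝ}

theorem Dconst_mul_omegaS (γ k : ℕ) (hb : 0 < b) :
    Dconst (b + γ + k + 1) (γ + k + 1) γ * omegaS (b + γ + k + 1 - γ) =
      omegaS (k + 1) / ∫ z in (0:ℝ)..1, projDensity γ b z := by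
  have hcancel : omegaS (b + γ + k + 1 - γ) ≠ 0 := (omegaS_pos (by lia)).ne'
  rw [Dconst, integral_projDensity hb, show γ + k + 1 - γ = k + 1 by lia,
    show b + γ + k + 1 - (γ + k + 1) = b by lia, show b + γ + 1 = γ + 1 + b by lia]
  field_simp

theorem integral_Pprob_eq (hK : K < 0) (hu : 0 < u) (hb : 2 ≤ b) :
    ∫ r in (0:ℝ)..(1 / √(-K)), r ^ (((γ + k + 1 : ℕ) : ℝ) - (γ : ℝ) - 1) *
      ∫ z in (0:ℝ)..(min 1 (RK K u / r)), z ^ (γ + k + 1) *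
        (1 - z ^ 2) ^ ((((b + γ + k + 1 : ℕ) : ℝ) - ((γ + k + 1 : ℕ) : ℝ)) / 2 - 1) *
          (1 + K * r ^ 2 * z ^ 2) ^ (-(((b + γ + k + 1 : ℕ) : ℝ) + 1) / 2) =
      ∫ z in (0:ℝ)..1, projDensity γ b z * kleinMass K u (b + γ) k z := by
  have hr_exp : ((γ + k + 1 : ℕ) : ℝ) - (γ : ℝ) - 1 = (k : ℝ) := by push_cast; ring
  have hz_exp : ((b + γ + k + 1 : ℕ) : ℝ) - ((γ + k + 1 : ℕ) : ℝ) = b := by push_cast; ring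
  have hK_exp : ((b + γ + k + 1 : ℕ) : ℝ) + 1 = ((b + γ : ℕ) : ℝ) + k + 2 := by push_cast; ring
  rw [hr_exp, hz_exp, hK_exp]
  simp only [kleinMass]
  rw [← intervalIntegral_mul_comp_mul_swap_min (by positivity) (RK_pos hK hu).le
    ((continuous_projDensity hb).intervalIntegrable 0 1) (continuousOn_kleinDensity hK)]
  simp only [rpow_natCast, ← intervalIntegral.integral_const_mul, projDensity, kleinDensity]
  refine intervalIntegral.integral_congr fun r _ => intervalIntegral.integral_congr fun z _ => ?_
  simp only [mul_pow, ← mul_assoc K]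
  ring

theorem Pprob_eq_average (hK : K < 0) (hu : 0 < u) (hb : 2 ≤ b) :
    Pprob (b + γ + k + 1) (γ + k + 1) γ K u =
      (∫ z in (0:ℝ)..1, projDensity γ b z * kleinMass K u (b + γ) k z) /
        ((∫ z in (0:ℝ)..1, projDensity γ b z) *
          ∫ t in (0:ℝ)..RK K u, kleinDensity K (b + γ) k t) := by
  have hω : omegaS (k + 1) ≠ 0 := (omegaS_pos k.succ_pos).ne'
  rw [Pprob, Dconst_mul_omegaS γ k (by lia), integral_Pprob_eq hK hu hb,
    show b + γ + k + 1 - (γ + k + 1) + γ = b + γ by lia,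
    Cconst_eq_omegaS_mul_integral_kleinDensity hK]
  field_simp

theorem Pprob_le_one (hK : K < 0) (hu : 0 < u) (hb : 2 ≤ b) :
    Pprob (b + γ + k + 1) (γ + k + 1) γ K u ≤ 1 := by
  rw [Pprob_eq_average hK hu hb]
  refine div_le_one_of_le₀ ?_
    (mul_nonneg (integral_projDensity_pos (by lia)).le (integral_kleinDensity_pos hK hu).le)
  exact integral_mul_le_integral_mul_const zero_le_one
    ((continuous_projDensity hb).intervalIntegrable 0 1) (fun z hz => projDensity_nonneg hz)
    ((continuousOn_kleinMass hK hu).mono Set.Icc_subset_Ici_self)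
    (fun z hz => kleinMass_le hK hu hz.1)

theorem one_sub_integral_div_le_Pprob (hK : K < 0) (hu : 0 < u) (hb : 2 ≤ b) :
    1 - (∫ z in (0:ℝ)..tanh (√(-K) * u), projDensity γ b z) /
        (∫ z in (0:ℝ)..1, projDensity γ b z) ≤ Pprob (b + γ + k + 1) (γ + k + 1) γ K u := by
  have hint : ∀ x y, IntervalIntegrable (projDensity γ b) volume x y :=
    (continuous_projDensity hb).intervalIntegrable
  have hS : 0 < ∫ z in (0:ℝ)..1, projDensity γ b z := integral_projDensity_pos (by lia)
  have hM : 0 < ∫ t in (0:ℝ)..RK K u, kleinDensity K (b + γ) k t := integral_kleinDensity_pos hK hu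
  have htanh0 : 0 ≤ tanh (√(-K) * u) := tanh_nonneg (by positivity)
  have hbulk := integral_mul_const_le_integral_mul htanh0 (tanh_lt_one _).le (hint 0 1)
    (fun z hz => projDensity_nonneg hz)
    ((continuousOn_kleinMass hK hu).mono Set.Icc_subset_Ici_self)
    (fun z hz => kleinMass_nonneg hK hu hz.1)
    (fun z hz => kleinMass_eq_of_tanh_le (m := b + γ) (k := k) hz.1)
  rw [Pprob_eq_average hK hu hb, one_sub_div hS.ne',
    intervalIntegral.integral_interval_sub_left (hint _ _) (hint _ _),
    ← mul_div_mul_right _ _ hM.ne']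
  gcongr

theorem one_sub_le_Pprob (hK : K < 0) (hu : 0 < u) (hb : 4 ≤ b) :
    1 - 2 * (√(-K * (b + γ + k + 1 : ℕ)) * u) ^ (γ + 1) ≤
      Pprob (b + γ + k + 1) (γ + k + 1) γ K u := by
  have hsu : 0 ≤ √(-K) * u := by positivity
  have htanh0 : 0 ≤ tanh (√(-K) * u) := tanh_nonneg hsu
  have hscale : √(b : ℝ) * tanh (√(-K) * u) ≤ √(-K * (b + γ + k + 1 : ℕ)) * u := calc
    √(b : ℝ) * tanh (√(-K) * u) ≤ √((b + γ + k + 1 : ℕ) : ℝ) * (√(-K) * u) := by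
      gcongr
      · lia
      · exact tanh_le_self hsu
    _ = √(-K * (b + γ + k + 1 : ℕ)) * u := by
      rw [sqrt_mul (neg_pos.2 hK).le]
      ring
  have hmass : 0 < ∫ z in (0:ℝ)..1, projDensity γ b z := integral_projDensity_pos (by lia)
  refine le_trans ?_ (one_sub_integral_div_le_Pprob hK hu (by lia))
  refine sub_le_sub_left ((div_le_iff₀ hmass).2 ?_) 1
  refine (integral_projDensity_le_mul hb ⟨htanh0, (tanh_lt_one _).le⟩).trans ?_
  gcongr

end Pprob

/-- subcritical phase, `-K(d)·d → 0` implies the intersection probability tends to 1. -/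
theorem phase_transition_subcritical (q γ : ℕ) (hq : 1 ≤ q) (hγ : γ ≤ q - 1) (u : ℝ)
    (hu : 0 < u) (K : ℕ → ℝ) (hK : ∀ d : ℕ, 2 ≤ d → K d < 0)
    (h : Tendsto (fun d : ℕ => -K d * (d : ℝ)) atTop (nhds 0)) :
    Tendsto (fun d : ℕ => Pprob d q γ (K d) u) atTop (nhds 1) := by
  obtain ⟨k, rfl⟩ : ∃ k, q = γ + k + 1 := Nat.exists_eq_add_of_lt (by lia)
  have hlower : Tendsto (fun d : ℕ => 1 - 2 * (√(-K d * d) * u) ^ (γ + 1)) atTop (nhds 1) := by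
    simpa using (((h.sqrt.mul_const u).pow (γ + 1)).const_mul 2).const_sub 1
  have hsplit : ∀ᶠ d in atTop, ∃ b, 4 ≤ b ∧ d = b + γ + k + 1 := by
    filter_upwards [eventually_ge_atTop (γ + k + 5)] with d hd
    exact ⟨d - (γ + k + 1), by lia, by lia⟩
  refine tendsto_of_tendsto_of_tendsto_of_le_of_le' hlower tendsto_const_nhds ?_ ?_
  · filter_upwards [hsplit] with d ⟨b, hb, hd⟩
    subst hd
    exact one_sub_le_Pprob (hK _ (by lia)) hu hb
  · filter_upwards [hsplit] with d ⟨b, hb, hd⟩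
    subst hd
    exact Pprob_le_one (hK _ (by lia)) hu (by lia)
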